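/- Let m be a positive integer and q₁,…,q_s prime powers with 2m | q_i+1. Let G = G₁ × ⋯ × G_s with G_i elementary abelian of order q_i⁴ and u = q₁²⋯q_s². Then there exists a strongly regular Cayley graph on G with Latin square type parameters (u², c(u−1), u+c²−3c, c²−c) for each c of the form c = (i+j)(u−1)/m + j with 0 ≤ i ≤ m−2, j ∈ {0,1,2}, and for each c of the form c = (j+i)(u−1)/m + 2j with 0 ≤ i ≤ m−1, j ∈ {0,1}. -/

import Mathlib

/-!
A partial difference set is recognised by its character values, so one looks for functions on `G`
with few values whose Fourier transforms are again of this kind. A building block is a pair `a, b`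
of such functions, each given at two parities and labelling the nonzero points by the elements of a
group `Λ` of order `m`, which the Fourier transform turns into another pair of this form; products
of building blocks are building blocks.

On the field `L` with `q ^ 4` elements, a quadratic extension of `K`, the labels are read off the
discrete logarithm, modulo `q ^ 2 + 1` for `a` and modulo `2 * m` for `b`. A function invariant
under `Kˣ` is transformed into a rescaling of itself, because the elements of trace `0` form a
`K`-line. A function invariant under `(q + 1)`-th powers factors through the norm `N`, and
completing the square in `ψ (t * N z + Tr (y * z))` reduces its transform to a sum over `K`, which
can be evaluated when the character `ψ` is invariant under `x ↦ x ^ q`.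

Finally the labels may be fused arbitrarily: every set `S` of labels yields the partial difference
set of the nonzero points with label in `S`, where the labels at parity `ε` may first be shifted by
`t ε`. The parameter `c` depends on the size of `S` and on the number of `ε` with `t ε ∈ S`.
-/

open scoped Classical

open scoped Finset

section CharacterSums

variable {G H A : Type*} [AddCommGroup G] [Fintype G] [AddCommGroup H] [Fintype H]

/-- The Fourier transform of a module-valued function on a finite abelian group. -/
noncomputable def charSum [AddCommGroup A] [Module ℂ A] (f : G → A) (χ : AddChar G ℂ) : A :=
  ∑ z, χ z • f z

section Module

variable [AddCommGroup A] [Module ℂ A]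

lemma charSum_zero (f : G → A) : charSum f 0 = ∑ z, f z := by
  simp only [charSum, AddChar.zero_apply, one_smul]

lemma charSum_add (f g : G → A) (χ : AddChar G ℂ) :
    charSum (fun z => f z + g z) χ = charSum f χ + charSum g χ := by
  simp only [charSum, smul_add, Finset.sum_add_distrib]

lemma charSum_map {B : Type*} [AddCommGroup B] [Module ℂ B] (L : A →ₗ[ℂ] B) (f : G → A)
    (χ : AddChar G ℂ) : charSum (fun z => L (f z)) χ = L (charSum f χ) := by
  simp only [charSum, map_sum, map_smul]

lemma charSum_comp_equiv (e : G ≃+ H) (f : G → A) (χ : AddChar H ℂ) :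
    charSum (fun z => f (e.symm z)) χ = charSum f (χ.compAddMonoidHom e) := by
  refine Fintype.sum_equiv e.symm.toEquiv _ _ fun z => ?_
  simp

lemma sum_charSum_smul (f : G → A) (a : G) :
    ∑ χ : AddChar G ℂ, χ (-a) • charSum f χ = (Fintype.card G : ℂ) • f a := by
  calc ∑ χ : AddChar G ℂ, χ (-a) • charSum f χ
      = ∑ z, (∑ χ : AddChar G ℂ, χ (z - a)) • f z := by
        simp only [charSum, Finset.smul_sum, smul_smul, Finset.sum_smul]
        rw [Finset.sum_comm]
        simp only [← AddChar.map_add_eq_mul, sub_eq_neg_add]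
    _ = (Fintype.card G : ℂ) • f a := by
        simp [AddChar.sum_apply_eq_ite, sub_eq_zero, ite_smul]

lemma charSum_injective : Function.Injective (charSum : (G → A) → AddChar G ℂ → A) := by
  intro f g h
  funext a
  have hcard : (Fintype.card G : ℂ) ≠ 0 := Nat.cast_ne_zero.mpr Fintype.card_ne_zero
  refine smul_right_injective A hcard ?_
  simp only [← sum_charSum_smul, h]

end Module

section Algebra

variable [CommRing A] [Algebra ℂ A]

lemma charSum_mul_prod (f : G → A) (g : H → A) (χ : AddChar (G × H) ℂ) :
    charSum (fun z : G × H => f z.1 * g z.2) χ =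
      charSum f (χ.compAddMonoidHom (.inl G H)) * charSum g (χ.compAddMonoidHom (.inr G H)) := by
  simp only [charSum, Finset.sum_mul_sum, Fintype.sum_prod_type]
  refine Finset.sum_congr rfl fun x _ => Finset.sum_congr rfl fun y _ => ?_
  have hχ : χ (x, y) = χ (x, 0) * χ (0, y) := by
    rw [← AddChar.map_add_eq_mul, Prod.mk_add_mk, add_zero, zero_add]
  simp only [AddChar.compAddMonoidHom_apply, AddMonoidHom.inl_apply, AddMonoidHom.inr_apply, hχ,
    smul_mul_smul_comm]

lemma charSum_conv (f g : G → A) (χ : AddChar G ℂ) :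
    charSum (fun z => ∑ x, f x * g (z - x)) χ = charSum f χ * charSum g χ := by
  simp only [charSum, Finset.smul_sum, Finset.sum_mul_sum]
  rw [Finset.sum_comm]
  refine Finset.sum_congr rfl fun x _ => ?_
  refine Fintype.sum_equiv (Equiv.subRight x) _ _ fun z => ?_
  rw [Equiv.subRight_apply, smul_mul_smul_comm, ← AddChar.map_add_eq_mul, add_sub_cancel]

end Algebra

end CharacterSums

section PartialDifferenceSets

variable {G : Type*} [AddCommGroup G] {D : Finset G}

/-- `D` is a regular partial difference set whose Cayley graph is strongly regular with the Latin
square type parameters `(u², c(u-1), u+c²-3c, c²-c)`. -/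
def IsLatinSquarePDS [Fintype G] [DecidableEq G] (D : Finset G) (u : ℕ) (c : ℤ) : Prop :=
  0 ∉ D ∧ (∀ g ∈ D, -g ∈ D) ∧
    ∃ k l μ : ℕ, (SimpleGraph.fromRel fun a b : G => a - b ∈ D).IsSRGWith (u ^ 2) k l μ ∧
      (k : ℤ) = c * ((u : ℤ) - 1) ∧ (l : ℤ) = (u : ℤ) + c ^ 2 - 3 * c ∧ (μ : ℤ) = c ^ 2 - c

lemma fromRel_sub_mem_adj (h0 : 0 ∉ D) (hneg : ∀ g ∈ D, -g ∈ D) (a b : G) :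
    (SimpleGraph.fromRel fun a b : G => a - b ∈ D).Adj a b ↔ a - b ∈ D := by
  rw [SimpleGraph.fromRel_adj]
  constructor
  · rintro ⟨-, h | h⟩
    · exact h
    · simpa using hneg _ h
  · intro h
    exact ⟨fun hab => h0 (by simpa [hab] using h), Or.inl h⟩

variable [Fintype G] [DecidableEq G]

lemma card_commonNeighbors_fromRel_sub_mem (h0 : 0 ∉ D) (hneg : ∀ g ∈ D, -g ∈ D) (v w : G) :
    Fintype.card ((SimpleGraph.fromRel fun a b : G => a - b ∈ D).commonNeighbors v w) =
      #{x ∈ D | v - w - x ∈ D} := by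
  rw [← Set.toFinset_card]
  refine Finset.card_bij (fun x _ => v - x) (fun x hx => ?_) (fun x _ y _ h => ?_) fun x hx => ?_
  · rw [Set.mem_toFinset, SimpleGraph.mem_commonNeighbors, fromRel_sub_mem_adj h0 hneg,
      fromRel_sub_mem_adj h0 hneg] at hx
    rw [Finset.mem_filter]
    exact ⟨hx.1, by simpa using hneg _ hx.2⟩
  · exact sub_right_injective h
  · rw [Finset.mem_filter] at hx
    refine ⟨v - x, ?_, sub_sub_cancel v x⟩
    rw [Set.mem_toFinset, SimpleGraph.mem_commonNeighbors, fromRel_sub_mem_adj h0 hneg,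
      fromRel_sub_mem_adj h0 hneg, sub_sub_cancel]
    exact ⟨hx.1, by convert hneg _ hx.2 using 1; abel⟩

lemma isSRGWith_fromRel_sub_mem (h0 : 0 ∉ D) (hneg : ∀ g ∈ D, -g ∈ D) {l μ : ℕ}
    (hl : ∀ g ∈ D, #{x ∈ D | g - x ∈ D} = l)
    (hμ : ∀ g ∉ D, g ≠ 0 → #{x ∈ D | g - x ∈ D} = μ) :
    (SimpleGraph.fromRel fun a b : G => a - b ∈ D).IsSRGWith (Fintype.card G) (#D) l μ where
  card := rfl
  regular v := by
    refine Finset.card_bij (fun x _ => v - x) (fun x hx => ?_) (fun x _ y _ h => ?_) fun x hx => ?_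
    · rwa [SimpleGraph.mem_neighborFinset, fromRel_sub_mem_adj h0 hneg] at hx
    · exact sub_right_injective h
    · refine ⟨v - x, ?_, sub_sub_cancel v x⟩
      rwa [SimpleGraph.mem_neighborFinset, fromRel_sub_mem_adj h0 hneg, sub_sub_cancel]
  of_adj v w hvw := by
    rw [card_commonNeighbors_fromRel_sub_mem h0 hneg]
    exact hl _ ((fromRel_sub_mem_adj h0 hneg v w).mp hvw)
  of_not_adj v w hne hvw := by
    rw [card_commonNeighbors_fromRel_sub_mem h0 hneg]
    exact hμ _ (fun h => hvw ((fromRel_sub_mem_adj h0 hneg v w).mpr h)) (sub_ne_zero.mpr hne)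

lemma card_filter_sub_mem_of_charSum {u : ℕ} {c : ℤ} (hG : Fintype.card G = u ^ 2)
    (hcard : (#D : ℤ) = c * (u - 1))
    (hχ : ∀ χ : AddChar G ℂ, χ ≠ 0 → ∑ x ∈ D, χ x = -c ∨ ∑ x ∈ D, χ x = u - c) (g : G) :
    (#{x ∈ D | g - x ∈ D} : ℂ) =
      (c ^ 2 - c : ℂ) + (if g ∈ D then (u - 2 * c : ℂ) else 0) +
        if g = 0 then (u * c - c ^ 2 : ℂ) else 0 := by
  set d : G → ℂ := fun x => if x ∈ D then 1 else 0
  have hd (χ : AddChar G ℂ) : charSum d χ = ∑ x ∈ D, χ x := by simp [charSum, d]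
  suffices (fun g => ∑ x, d x * d (g - x)) = fun g => (c ^ 2 - c : ℂ) +
      (if g ∈ D then (u - 2 * c : ℂ) else 0) + if g = 0 then (u * c - c ^ 2 : ℂ) else 0 by
    rw [← congrFun this g]
    simp only [d, ite_mul, one_mul, zero_mul, Finset.sum_ite_mem, Finset.univ_inter,
      Finset.sum_boole]
  refine charSum_injective (funext fun χ => ?_)
  have hrhs : charSum (fun g => (c ^ 2 - c : ℂ) + (if g ∈ D then (u - 2 * c : ℂ) else 0) +
      if g = 0 then (u * c - c ^ 2 : ℂ) else 0) χ =
      (∑ x, χ x) * (c ^ 2 - c) + (∑ x ∈ D, χ x) * (u - 2 * c) + (u * c - c ^ 2) := by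
    rw [charSum_add, charSum_add]
    simp only [charSum, smul_eq_mul, mul_ite, mul_zero, Finset.sum_ite_mem, Finset.univ_inter,
      Finset.sum_ite_eq', Finset.mem_univ, if_true, AddChar.map_zero_eq_one, one_mul,
      ← Finset.sum_mul]
  rw [charSum_conv, hrhs, hd]
  rcases eq_or_ne χ 0 with rfl | hne
  · have hcard' : (#D : ℂ) = c * (u - 1) := by exact_mod_cast hcard
    simp only [AddChar.zero_apply, Finset.sum_const, Finset.card_univ, hG, nsmul_eq_mul, mul_one,
      hcard', Nat.cast_pow]
    ring
  · rw [AddChar.sum_eq_zero_iff_ne_zero.mpr hne]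
    rcases hχ χ hne with h | h <;> rw [h] <;> ring

theorem isLatinSquarePDS_of_charSum {u : ℕ} {c : ℤ} (hu : 2 ≤ u) (hG : Fintype.card G = u ^ 2)
    (h0 : 0 ∉ D) (hneg : ∀ g ∈ D, -g ∈ D) (hcard : (#D : ℤ) = c * (u - 1))
    (hχ : ∀ χ : AddChar G ℂ, χ ≠ 0 → ∑ x ∈ D, χ x = -c ∨ ∑ x ∈ D, χ x = u - c) :
    IsLatinSquarePDS D u c := by
  have hN := card_filter_sub_mem_of_charSum hG hcard hχ
  obtain ⟨l, hl⟩ : ∃ l : ℕ, (l : ℤ) = u + c ^ 2 - 3 * c := by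
    refine ⟨_, Int.toNat_of_nonneg ?_⟩
    nlinarith [Int.le_self_sq (c - 1), Int.le_self_sq (2 - c), sq_nonneg (c - 1)]
  obtain ⟨μ, hμ⟩ : ∃ μ : ℕ, (μ : ℤ) = c ^ 2 - c :=
    ⟨_, Int.toNat_of_nonneg (sub_nonneg.mpr (Int.le_self_sq c))⟩
  refine ⟨h0, hneg, #D, l, μ, hG ▸ isSRGWith_fromRel_sub_mem h0 hneg ?_ ?_, hcard, hl, hμ⟩
  · intro g hg
    have hlC : (l : ℂ) = u + c ^ 2 - 3 * c := by exact_mod_cast hl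
    have hg0 : g ≠ 0 := fun h => h0 (h ▸ hg)
    have hNg := hN g
    rw [if_pos hg, if_neg hg0] at hNg
    refine Nat.cast_injective (R := ℂ) ?_
    rw [hNg, hlC]
    ring
  · intro g hg hg0
    have hμC : (μ : ℂ) = c ^ 2 - c := by exact_mod_cast hμ
    refine Nat.cast_injective (R := ℂ) ?_
    rw [hN, if_neg hg, if_neg hg0, hμC, add_zero, add_zero]

end PartialDifferenceSets

section BuildingBlocks

variable {Λ A : Type*} [AddCommGroup Λ] [CommRing A]

/-- A pair `a, b` of partial labellings by the values of `τ`, indexed by parities: every `x ≠ 0`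
has a parity `π` at which both `a π x` and `b π x` are values of `τ`, and both vanish at `x` for
the other parity. -/
structure IsSplitLabelling {X : Type*} [Zero X] (τ : AddChar Λ A) (a b : ZMod 2 → X → A) :
    Prop where
  a_zero : ∀ ε, a ε 0 = 1
  b_zero : ∀ ε, b ε 0 = 0
  exists_label : ∀ x ≠ 0, ∃ π s t, a π x = τ s ∧ a (π + 1) x = 0 ∧ b π x = τ t ∧ b (π + 1) x = 0

namespace IsSplitLabelling

variable {X Y : Type*} [Zero X] [Zero Y] {τ : AddChar Λ A}

lemma comp {a b : ZMod 2 → Y → A} (h : IsSplitLabelling τ a b) {f : X → Y}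
    (hf : ∀ x, f x = 0 ↔ x = 0) :
    IsSplitLabelling τ (fun ε x => a ε (f x)) (fun ε x => b ε (f x)) where
  a_zero ε := by rw [(hf 0).mpr rfl, h.a_zero]
  b_zero ε := by rw [(hf 0).mpr rfl, h.b_zero]
  exists_label x hx := h.exists_label (f x) (mt (hf x).mp hx)

lemma prod {a b : ZMod 2 → X → A} {a' b' : ZMod 2 → Y → A}
    (h : IsSplitLabelling τ a b) (h' : IsSplitLabelling τ a' b') :
    IsSplitLabelling τ
      (fun ε (z : X × Y) => a ε z.1 * a' ε z.2 + b (ε + 1) z.1 * b' ε z.2)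
      (fun ε (z : X × Y) => b ε z.1 * a' ε z.2 + a (ε + 1) z.1 * b' ε z.2) where
  a_zero ε := by simp [h.a_zero, h'.a_zero, h.b_zero]
  b_zero ε := by simp [h.b_zero, h'.b_zero]
  exists_label := by
    rintro ⟨x, y⟩ hxy
    have hadd (π : ZMod 2) : π + 1 + 1 = π := CharTwo.add_cancel_right π 1
    rcases eq_or_ne y 0 with rfl | hy
    · have hx : x ≠ 0 := fun hx => hxy (by rw [hx]; rfl)
      simpa [h'.a_zero, h'.b_zero] using h.exists_label x hx
    obtain ⟨π', s', t', ha', ha'', hb', hb''⟩ := h'.exists_label y hy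
    rcases eq_or_ne x 0 with rfl | hx
    · exact ⟨π', s', t', by simp [h.a_zero, h.b_zero, *]⟩
    obtain ⟨π, s, t, ha, ha₁, hb, hb₁⟩ := h.exists_label x hx
    obtain rfl | rfl : π = π' ∨ π = π' + 1 :=
      (by decide : ∀ π π' : ZMod 2, π = π' ∨ π = π' + 1) π π'
    · exact ⟨π, s + s', t + s', by simp [*, AddChar.map_add_eq_mul]⟩
    · rw [hadd] at ha₁ hb₁
      exact ⟨π', t + t', s + t', by simp [*, AddChar.map_add_eq_mul]⟩

end IsSplitLabelling

variable [Algebra ℂ A]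

/-- A building block: a symmetric split labelling `a, b` of `G` whose Fourier transform, divided by
`u`, is again a split labelling, where `b` returns with its sign and its two parities changed. -/
structure BuildingBlock (τ : AddChar Λ A) (G : Type*) [AddCommGroup G] [Fintype G] (u : ℕ) where
  /-- The labelling with value `1` at the origin. -/
  a : ZMod 2 → G → A
  /-- The labelling with value `0` at the origin. -/
  b : ZMod 2 → G → A
  a_neg : ∀ ε z, a ε (-z) = a ε z
  b_neg : ∀ ε z, b ε (-z) = b ε z
  primal : IsSplitLabelling τ a b
  dual : IsSplitLabelling τ (fun ε χ => (u : ℂ)⁻¹ • charSum (a ε) χ)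
    (fun ε χ => -(u : ℂ)⁻¹ • charSum (b (ε + 1)) χ)

lemma compAddMonoidHom_inl_eq_zero_and_inr_eq_zero_iff {G H : Type*} [AddCommGroup G]
    [AddCommGroup H] (χ : AddChar (G × H) ℂ) :
    (χ.compAddMonoidHom (.inr G H), χ.compAddMonoidHom (.inl G H)) = 0 ↔ χ = 0 := by
  constructor
  · intro h
    rw [Prod.ext_iff, DFunLike.ext_iff, DFunLike.ext_iff] at h
    ext ⟨x, y⟩
    have hxy : (x, y) = (x, 0) + (0, y) := by simp
    have hx : χ (x, 0) = 1 := h.2 x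
    have hy : χ (0, y) = 1 := h.1 y
    rw [hxy, AddChar.map_add_eq_mul, hx, hy, one_mul, AddChar.zero_apply]
  · rintro rfl
    rfl

namespace BuildingBlock

variable {G H : Type*} [AddCommGroup G] [Fintype G] [AddCommGroup H] [Fintype H]
  {τ : AddChar Λ A} {u v : ℕ}

/-- The product of two building blocks. -/
noncomputable def prod (B : BuildingBlock τ G u) (C : BuildingBlock τ H v) :
    BuildingBlock τ (G × H) (u * v) where
  a ε z := B.a ε z.1 * C.a ε z.2 + B.b (ε + 1) z.1 * C.b ε z.2
  b ε z := B.b ε z.1 * C.a ε z.2 + B.a (ε + 1) z.1 * C.b ε z.2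
  a_neg ε z := by simp only [Prod.fst_neg, Prod.snd_neg, B.a_neg, B.b_neg, C.a_neg, C.b_neg]
  b_neg ε z := by simp only [Prod.fst_neg, Prod.snd_neg, B.a_neg, B.b_neg, C.a_neg, C.b_neg]
  primal := B.primal.prod C.primal
  dual := by
    -- The Fourier transform of the product is the product with its factors interchanged.
    have hadd (ε : ZMod 2) : ε + 1 + 1 = ε := CharTwo.add_cancel_right ε 1
    convert (C.dual.prod B.dual).comp compAddMonoidHom_inl_eq_zero_and_inr_eq_zero_iff
      using 3 with ε χ ε χ
    all_goals
      simp only [charSum_add, charSum_mul_prod, Nat.cast_mul, mul_inv, hadd, Algebra.smul_def,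
        map_neg, map_mul]
      ring

lemma charSum_map_sum_mul (L : A →ₗ[ℂ] ℂ) (hu : u ≠ 0) (B : BuildingBlock τ G u)
    (t : ZMod 2 → Λ) (χ : AddChar G ℂ) :
    charSum (fun z => L (∑ ε, τ (t ε) * B.a ε z)) χ =
      u * L (∑ ε, τ (t ε) * ((u : ℂ)⁻¹ • charSum (B.a ε) χ)) := by
  rw [charSum_map, ← smul_eq_mul (u : ℂ), ← map_smul]
  congr 1
  simp only [charSum, Finset.smul_sum, mul_smul_comm, smul_smul,
    mul_inv_cancel_left₀ (Nat.cast_ne_zero.mpr hu : (u : ℂ) ≠ 0), Finset.mul_sum]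
  exact Finset.sum_comm

/-- Transport of a building block along an isomorphism. -/
noncomputable def congr (B : BuildingBlock τ G u) (e : G ≃+ H) : BuildingBlock τ H u where
  a ε z := B.a ε (e.symm z)
  b ε z := B.b ε (e.symm z)
  a_neg ε z := by rw [map_neg, B.a_neg]
  b_neg ε z := by rw [map_neg, B.b_neg]
  primal := B.primal.comp fun z => e.symm.map_eq_zero_iff
  dual := by
    have he (χ : AddChar H ℂ) : χ.compAddMonoidHom (e : G →+ H) = 0 ↔ χ = 0 := by
      simp only [DFunLike.ext_iff, AddChar.compAddMonoidHom_apply, AddChar.zero_apply]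
      exact (e.surjective.forall (p := fun y => χ y = 1)).symm
    simpa only [charSum_comp_equiv] using B.dual.comp he

/-- The building block on the trivial group. -/
noncomputable def ofSubsingleton [Subsingleton G] : BuildingBlock τ G 1 where
  a _ _ := 1
  b _ _ := 0
  a_neg _ _ := rfl
  b_neg _ _ := rfl
  primal := ⟨fun _ => rfl, fun _ => rfl, fun x hx => (hx (Subsingleton.elim x 0)).elim⟩
  dual := by
    have hcard : Fintype.card G = 1 :=
      Fintype.card_eq_one_iff.mpr ⟨0, fun x => Subsingleton.elim x 0⟩
    refine ⟨fun _ => ?_, fun _ => ?_, fun χ hχ => (hχ ?_).elim⟩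
    · simp [charSum_zero, hcard]
    · simp [charSum_zero]
    · ext x
      rw [Subsingleton.elim x 0, AddChar.map_zero_eq_one, AddChar.map_zero_eq_one]

theorem nonempty_pi {s : ℕ} {F : Fin s → Type*} [∀ i, AddCommGroup (F i)] [∀ i, Fintype (F i)]
    {u : Fin s → ℕ} (h : ∀ i, Nonempty (BuildingBlock τ (F i) (u i))) :
    Nonempty (BuildingBlock τ (∀ i, F i) (∏ i, u i)) := by
  induction s with
  | zero => exact ⟨by simpa using ofSubsingleton⟩
  | succ s ih =>
    obtain ⟨B⟩ := h 0
    obtain ⟨C⟩ := ih fun i => h i.succ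
    rw [Fin.prod_univ_succ]
    exact ⟨(B.prod C).congr (Fin.consLinearEquiv ℤ F).toAddEquiv⟩

end BuildingBlock

end BuildingBlocks

section Fusion

variable {Λ A : Type*} [AddCommGroup Λ] [Fintype Λ]

/-- The sum of the nontrivial complex characters of `Λ`, as one character with values in a product
of copies of `ℂ`. Its values satisfy no linear relation except that their sum vanishes. -/
def nontrivialCharacters (Λ : Type*) [AddCommGroup Λ] :
    AddChar Λ ({χ : AddChar Λ ℂ // χ ≠ 0} → ℂ) where
  toFun t χ := χ.1 t
  map_zero_eq_one' := funext fun χ => χ.1.map_zero_eq_one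
  map_add_eq_mul' s t := funext fun χ => χ.1.map_add_eq_mul s t

lemma sum_nontrivialCharacters : ∑ t, nontrivialCharacters Λ t = 0 := by
  funext χ
  simpa [nontrivialCharacters] using AddChar.sum_eq_zero_iff_ne_zero.mpr χ.2

lemma sum_nontrivialCharacters_apply (t : Λ) :
    ∑ χ, nontrivialCharacters Λ t χ = (if t = 0 then (Fintype.card Λ : ℂ) else 0) - 1 := by
  have h := AddChar.sum_apply_eq_ite t
  rw [Fintype.sum_eq_add_sum_subtype_ne _ (0 : AddChar Λ ℂ), AddChar.zero_apply] at h
  exact eq_sub_of_add_eq' h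

lemma exists_linearMap_nontrivialCharacters (S : Finset Λ) :
    ∃ L : ({χ : AddChar Λ ℂ // χ ≠ 0} → ℂ) →ₗ[ℂ] ℂ, ∀ t, L (nontrivialCharacters Λ t) =
      (if t ∈ S then 1 else 0) - #S / Fintype.card Λ := by
  have hΛ : (Fintype.card Λ : ℂ) ≠ 0 := Nat.cast_ne_zero.mpr Fintype.card_ne_zero
  let T : ({χ : AddChar Λ ℂ // χ ≠ 0} → ℂ) →ₗ[ℂ] ℂ := ∑ χ, LinearMap.proj χ
  refine ⟨(Fintype.card Λ : ℂ)⁻¹ •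
    ∑ s ∈ S, T ∘ₗ LinearMap.mulLeft ℂ (nontrivialCharacters Λ (-s)), fun t => ?_⟩
  have hT (s : Λ) : T (nontrivialCharacters Λ (-s) * nontrivialCharacters Λ t) =
      (if t = s then (Fintype.card Λ : ℂ) else 0) - 1 := by
    rw [← AddChar.map_add_eq_mul, neg_add_eq_sub, ← sub_eq_zero (a := t),
      ← sum_nontrivialCharacters_apply]
    simp [T]
  simp only [LinearMap.smul_apply, LinearMap.sum_apply, LinearMap.comp_apply,
    LinearMap.mulLeft_apply, hT, Finset.sum_sub_distrib, Finset.sum_ite_eq, Finset.sum_const,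
    nsmul_one, smul_eq_mul]
  split_ifs <;> field_simp
  ring

variable [CommRing A] [Algebra ℂ A] {τ : AddChar Λ A} {S : Finset Λ} {L : A →ₗ[ℂ] ℂ}

lemma IsSplitLabelling.exists_map_sum_mul {X : Type*} [Zero X] {a b : ZMod 2 → X → A}
    (h : IsSplitLabelling τ a b)
    (hL : ∀ t, L (τ t) = (if t ∈ S then 1 else 0) - #S / Fintype.card Λ)
    (t : ZMod 2 → Λ) {x : X} (hx : x ≠ 0) :
    ∃ r, L (∑ ε, τ (t ε) * a ε x) = (if r ∈ S then 1 else 0) - #S / Fintype.card Λ := by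
  obtain ⟨π, s, -, ha, ha', -⟩ := h.exists_label x hx
  have hπ : ∀ ε ≠ π, ε = π + 1 := (by decide : ∀ π ε : ZMod 2, ε ≠ π → ε = π + 1) π
  refine ⟨t π + s, ?_⟩
  rw [Fintype.sum_eq_single π fun ε hε => by rw [hπ ε hε, ha', mul_zero], ha,
    ← AddChar.map_add_eq_mul, hL]

lemma IsSplitLabelling.map_sum_mul_zero {X : Type*} [Zero X] {a b : ZMod 2 → X → A}
    (h : IsSplitLabelling τ a b)
    (hL : ∀ t, L (τ t) = (if t ∈ S then 1 else 0) - #S / Fintype.card Λ)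
    (t : ZMod 2 → Λ) :
    L (∑ ε, τ (t ε) * a ε 0) = #{ε | t ε ∈ S} - 2 * (#S / Fintype.card Λ) := by
  simp [h.a_zero, hL]

theorem BuildingBlock.exists_isLatinSquarePDS {G : Type*} [AddCommGroup G] [Fintype G]
    [DecidableEq G] {u : ℕ} (hu : 2 ≤ u) (hG : Fintype.card G = u ^ 2) (B : BuildingBlock τ G u)
    (hL : ∀ t, L (τ t) = (if t ∈ S then 1 else 0) - #S / Fintype.card Λ)
    (t : ZMod 2 → Λ) {c : ℤ}
    (hc : (c : ℂ) = #S / Fintype.card Λ * (u - 1) + #{ε | t ε ∈ S}) :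
    ∃ D : Finset G, IsLatinSquarePDS D u c := by
  set κ : ℂ := #S / Fintype.card Λ
  set e : ℕ := #{ε | t ε ∈ S}
  let f (z : G) : ℂ := L (∑ ε, τ (t ε) * B.a ε z)
  let D : Finset G := {z | z ≠ 0 ∧ f z = 1 - κ}
  have hf0 : f 0 = e - 2 * κ := B.primal.map_sum_mul_zero hL t
  have hD (z : G) : (if z ∈ D then (1 : ℂ) else 0) = f z + κ + if z = 0 then κ - e else 0 := by
    rcases eq_or_ne z 0 with rfl | hz
    · simp [D, hf0]
      ring
    · obtain ⟨r, hr⟩ := B.primal.exists_map_sum_mul hL t hz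
      replace hr : f z = (if r ∈ S then 1 else 0) - κ := hr
      by_cases hrS : r ∈ S <;> simp [D, hz, hr, hrS, eq_sub_iff_add_eq]
  have hDχ (χ : AddChar G ℂ) : ∑ z ∈ D, χ z = charSum f χ + (∑ z, χ z) * κ + (κ - e) := by
    calc ∑ z ∈ D, χ z = charSum (fun z => if z ∈ D then (1 : ℂ) else 0) χ := by simp [charSum]
      _ = _ := by
        simp only [hD, charSum_add]
        simp [charSum, Finset.sum_mul]
  refine ⟨D, isLatinSquarePDS_of_charSum hu hG (by simp [D]) (fun z hz => ?_) ?_ fun χ hχ => ?_⟩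
  · simpa [D, f, B.a_neg] using hz
  · have hf : charSum f 0 = u * (e - 2 * κ) :=
      (B.charSum_map_sum_mul L (by omega) t 0).trans (by rw [B.dual.map_sum_mul_zero hL t])
    have h := hDχ 0
    simp only [AddChar.zero_apply, Finset.sum_const, Finset.card_univ, nsmul_eq_mul, mul_one, hf,
      hG, Nat.cast_pow] at h
    have hcard : (#D : ℂ) = c * (u - 1) := by
      rw [h, hc]
      ring
    exact_mod_cast hcard
  · obtain ⟨r, hr⟩ := B.dual.exists_map_sum_mul hL t hχ
    rw [hDχ, B.charSum_map_sum_mul L (by omega), hr, AddChar.sum_eq_zero_iff_ne_zero.mpr hχ, hc]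
    split_ifs
    · right; ring
    · left; ring

theorem exists_isLatinSquarePDS_of_nontrivialCharacters {G : Type*} [AddCommGroup G] [Fintype G]
    [DecidableEq G] {u : ℕ} (hu : 2 ≤ u) (hG : Fintype.card G = u ^ 2)
    (B : BuildingBlock (nontrivialCharacters Λ) G u) (S : Finset Λ) (t : ZMod 2 → Λ) {c : ℤ}
    (hc : (Fintype.card Λ : ℤ) * c = #S * (u - 1) + Fintype.card Λ * #{ε | t ε ∈ S}) :
    ∃ D : Finset G, IsLatinSquarePDS D u c := by
  obtain ⟨L, hL⟩ := exists_linearMap_nontrivialCharacters S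
  refine B.exists_isLatinSquarePDS hu hG hL t ?_
  have hΛ : (Fintype.card Λ : ℂ) ≠ 0 := Nat.cast_ne_zero.mpr Fintype.card_ne_zero
  have hc' : (Fintype.card Λ : ℂ) * c = #S * (u - 1) + Fintype.card Λ * #{ε | t ε ∈ S} :=
    mod_cast hc
  field_simp
  linear_combination hc'

end Fusion

section FiniteGroups

lemma sum_comp_monoidHom_of_surjective {G H A : Type*} [Group G] [Fintype G] [Group H] [Fintype H]
    [AddCommMonoid A] {φ : G →* H} (hφ : Function.Surjective φ) {k : ℕ}
    (hk : Fintype.card G = k * Fintype.card H) (f : H → A) :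
    ∑ x, f (φ x) = k • ∑ y, f y := by
  have hfiber (y : H) : #{x | φ x = y} = #{x | φ x = 1} :=
    MonoidHom.card_fiber_eq_of_mem_range φ (hφ y) (hφ 1)
  have hker : #{x | φ x = 1} = k := by
    have hcard : Fintype.card G = Fintype.card H * #{x | φ x = 1} := by
      rw [← Finset.card_univ, Finset.card_eq_sum_card_fiberwise (f := φ) (t := Finset.univ)
        (fun _ _ => Finset.mem_univ _), Finset.sum_congr rfl fun y _ => hfiber y,
        Finset.sum_const, smul_eq_mul, Finset.card_univ]
    exact mul_left_cancel₀ Fintype.card_ne_zero (by rw [← hcard, hk, mul_comm])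
  rw [Finset.smul_sum, ← Finset.sum_fiberwise (s := Finset.univ) (g := φ)]
  refine Finset.sum_congr rfl fun y _ => ?_
  rw [Finset.sum_congr rfl fun x hx => by rw [(Finset.mem_filter.mp hx).2], Finset.sum_const,
    hfiber, hker]

lemma exists_pow_eq_of_pow_eq_one {G : Type*} [Group G] [IsCyclic G] [Finite G] {d e : ℕ}
    (hG : Nat.card G = d * e) {x : G} (hx : x ^ e = 1) : ∃ t : G, t ^ d = x := by
  obtain ⟨g, hg⟩ := IsCyclic.exists_generator (α := G)
  obtain ⟨k, rfl⟩ := hg x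
  have he : (e : ℤ) ≠ 0 := Nat.cast_ne_zero.mpr fun he => Nat.card_pos.ne' (hG.trans (by simp [he]))
  have hdvd : (d * e : ℤ) ∣ k * e := by
    rw [← Nat.cast_mul, ← hG, ← orderOf_eq_card_of_forall_mem_zpowers hg,
      orderOf_dvd_iff_zpow_eq_one, zpow_mul, zpow_natCast]
    exact hx
  obtain ⟨l, rfl⟩ := Int.dvd_of_mul_dvd_mul_right he hdvd
  exact ⟨g ^ l, by rw [← zpow_natCast, ← zpow_mul, mul_comm]⟩

end FiniteGroups

section FiniteFields

variable {F : Type*} [Field F] [Fintype F]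

lemma sum_units_add {A : Type*} [AddCommMonoid A] (f : F → A) :
    ∑ x, f x = f 0 + ∑ x : Fˣ, f x := by
  rw [Fintype.sum_eq_add_sum_subtype_ne f 0]
  congr 1
  exact (Fintype.sum_equiv unitsEquivNeZero _ _ fun x => rfl).symm

lemma sum_addChar_mul {ψ : AddChar F ℂ} (hψ : ψ ≠ 1) (y : F) :
    ∑ x, ψ (y * x) = if y = 0 then (Fintype.card F : ℂ) else 0 := by
  have h := AddChar.sum_mulShift y (AddChar.IsPrimitive.of_ne_one hψ)
  simpa [mul_comm] using h

lemma sum_units_addChar_inv_mul {ψ : AddChar F ℂ} (hψ : ψ ≠ 1) (y : F) :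
    ∑ t : Fˣ, ψ ((t : F)⁻¹ * y) = (if y = 0 then (Fintype.card F : ℂ) else 0) - 1 := by
  have h := sum_units_add fun t => ψ (y * t)
  rw [sum_addChar_mul hψ, mul_zero, AddChar.map_zero_eq_one] at h
  rw [h, add_sub_cancel_left]
  exact Fintype.sum_equiv (Equiv.inv Fˣ) _ _ fun t => by simp [mul_comm]

lemma exists_ne_zero_pow_eq_of_pow_eq_one {d e : ℕ} (hF : Fintype.card F = d * e + 1) {x : F}
    (hx : x ^ e = 1) : ∃ t ≠ 0, t ^ d = x := by
  have he : e ≠ 0 := by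
    rintro rfl
    exact Fintype.one_lt_card.ne' hF
  have hx0 : x ≠ 0 := by
    rintro rfl
    simp [he] at hx
  have hcard : Nat.card Fˣ = d * e := by
    rw [Nat.card_eq_fintype_card, Fintype.card_units, hF, Nat.add_sub_cancel]
  obtain ⟨t, ht⟩ := exists_pow_eq_of_pow_eq_one hcard (x := Units.mk0 x hx0)
    (Units.ext (by simpa using hx))
  exact ⟨t, t.ne_zero, by simpa using congrArg Units.val ht⟩

/-- Invariance under multiplication by nonzero `d`-th powers. -/
def IsPowInvariant {F A : Type*} [Field F] (d : ℕ) (f : F → A) : Prop :=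
  ∀ t ≠ 0, ∀ x, f (t ^ d * x) = f x

lemma IsPowInvariant.apply_neg {A : Type*} {d e : ℕ} {f : F → A} (hf : IsPowInvariant d f)
    (hF : Fintype.card F = d * e + 1) (he : Even e) (x : F) : f (-x) = f x := by
  obtain ⟨t, ht, htd⟩ := exists_ne_zero_pow_eq_of_pow_eq_one hF he.neg_one_pow
  rw [neg_eq_neg_one_mul, ← htd, hf t ht]

end FiniteFields

section QuadraticExtension

open Algebra (norm trace)

variable {K L : Type*} [Field K] [Field L] [Algebra K L]

lemma sum_units_addChar_trace_smul [Fintype K] [Fintype L] {A : Type*} [AddCommGroup A]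
    [Module ℂ A] {ψ : AddChar K ℂ} (hψ : ψ ≠ 1) {g : L → A}
    (hg : ∀ c : K, c ≠ 0 → ∀ z, g (c • z) = g z) (y : L) :
    (Fintype.card Kˣ : ℂ) • ∑ z, ψ (trace K L (y * z)) • g z =
      (Fintype.card K : ℂ) • ∑ z with trace K L (y * z) = 0, g z - ∑ z, g z := by
  have hsubst (t : Kˣ) : ∑ z, ψ (trace K L (y * z)) • g z =
      ∑ z, ψ ((t : K)⁻¹ * trace K L (y * z)) • g z := by
    refine Fintype.sum_equiv (MulAction.toPerm t) _ _ fun z => ?_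
    rw [MulAction.toPerm_apply, Units.smul_def, mul_smul_comm, map_smul, smul_eq_mul,
      inv_mul_cancel_left₀ t.ne_zero, hg _ t.ne_zero]
  calc (Fintype.card Kˣ : ℂ) • ∑ z, ψ (trace K L (y * z)) • g z
      = ∑ t : Kˣ, ∑ z, ψ ((t : K)⁻¹ * trace K L (y * z)) • g z := by
        rw [← Finset.sum_congr rfl fun t _ => hsubst t, Finset.sum_const, Finset.card_univ,
          Nat.cast_smul_eq_nsmul]
    _ = ∑ z, ((if trace K L (y * z) = 0 then (Fintype.card K : ℂ) else 0) - 1) • g z := by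
        rw [Finset.sum_comm]
        simp only [← Finset.sum_smul, sum_units_addChar_inv_mul hψ]
    _ = _ := by
        simp only [sub_smul, one_smul, ite_smul, zero_smul, Finset.sum_sub_distrib,
          Finset.sum_filter, Finset.smul_sum, smul_ite, smul_zero]

variable [Algebra.IsQuadraticExtension K L]

lemma norm_smul_quadraticExtension (c : K) (x : L) : norm K (c • x) = c ^ 2 * norm K x := by
  rw [Algebra.smul_def, map_mul, Algebra.norm_algebraMap,
    Algebra.IsQuadraticExtension.finrank_eq_two]

lemma norm_inv_quadraticExtension (x : L) : norm K x⁻¹ = (norm K x)⁻¹ := by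
  rcases eq_or_ne x 0 with rfl | hx
  · rw [inv_zero, Algebra.norm_zero, inv_zero]
  · refine eq_inv_of_mul_eq_one_left ?_
    rw [← map_mul, inv_mul_cancel₀ hx, map_one]

lemma finrank_ker_trace_quadraticExtension [Finite K] :
    Module.finrank K (trace K L).ker = 1 := by
  have h := (trace K L).finrank_range_add_finrank_ker
  rw [LinearMap.range_eq_top.mpr (Algebra.trace_surjective K L), finrank_top, Module.finrank_self,
    Algebra.IsQuadraticExtension.finrank_eq_two] at h
  omega

lemma trace_eq_zero_iff_exists_smul [Finite K] {δ : L} (hδ : δ ≠ 0) (htr : trace K L δ = 0)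
    {x : L} : trace K L x = 0 ↔ ∃ c : K, c • δ = x := by
  constructor
  · intro hx
    obtain ⟨c, hc⟩ := (finrank_eq_one_iff_of_nonzero' (⟨δ, htr⟩ : (trace K L).ker)
      fun h => hδ (congrArg Subtype.val h)).mp
        finrank_ker_trace_quadraticExtension ⟨x, hx⟩
    exact ⟨c, congrArg Subtype.val hc⟩
  · rintro ⟨c, rfl⟩
    rw [map_smul, htr, smul_zero]

lemma compAddMonoidHom_trace_ne_one [Finite K] {ψ : AddChar K ℂ} (hψ : ψ ≠ 1) :
    ψ.compAddMonoidHom (trace K L).toAddMonoidHom ≠ 1 := by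
  obtain ⟨x, hx⟩ := AddChar.ne_one_iff.mp hψ
  obtain ⟨z, rfl⟩ := Algebra.trace_surjective K L x
  exact AddChar.ne_one_iff.mpr ⟨z, hx⟩

lemma sum_addChar_trace_mul [Finite K] [Fintype L] {ψ : AddChar K ℂ} (hψ : ψ ≠ 1) {y : L}
    (hy : y ≠ 0) : ∑ z, ψ (trace K L (y * z)) = 0 :=
  (sum_addChar_mul (compAddMonoidHom_trace_ne_one hψ) y).trans (if_neg hy)

variable [Fintype K]

lemma card_quadraticExtension [Fintype L] : Fintype.card L = Fintype.card K ^ 2 := by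
  rw [Module.card_eq_pow_finrank (K := K), Algebra.IsQuadraticExtension.finrank_eq_two K L]

lemma frobeniusAlgHom_frobeniusAlgHom (x : L) :
    FiniteField.frobeniusAlgHom K L (FiniteField.frobeniusAlgHom K L x) = x := by
  have : Finite L := Module.finite_of_finite K
  let := Fintype.ofFinite L
  rw [FiniteField.frobeniusAlgHom_apply, FiniteField.frobeniusAlgHom_apply, ← pow_mul, ← sq,
    ← card_quadraticExtension (K := K) (L := L), FiniteField.pow_card]

lemma algebraMap_trace_quadraticExtension (x : L) :
    algebraMap K L (trace K L x) = x + FiniteField.frobeniusAlgHom K L x := by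
  have : Finite L := Module.finite_of_finite K
  rw [FiniteField.algebraMap_trace_eq_sum_pow, Algebra.IsQuadraticExtension.finrank_eq_two,
    Nat.card_eq_fintype_card]
  simp [Finset.sum_range_succ]

lemma algebraMap_norm_quadraticExtension (x : L) :
    algebraMap K L (norm K x) = x * FiniteField.frobeniusAlgHom K L x := by
  have : Finite L := Module.finite_of_finite K
  rw [FiniteField.algebraMap_norm_eq_prod_pow, Algebra.IsQuadraticExtension.finrank_eq_two,
    Nat.card_eq_fintype_card]
  simp [Finset.prod_range_succ]

lemma norm_add_quadraticExtension (x y : L) :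
    norm K (x + y) =
      norm K x + trace K L (x * FiniteField.frobeniusAlgHom K L y) + norm K y := by
  refine (algebraMap K L).injective ?_
  simp only [map_add, algebraMap_norm_quadraticExtension, algebraMap_trace_quadraticExtension,
    map_mul, frobeniusAlgHom_frobeniusAlgHom]
  ring

lemma norm_frobeniusAlgHom (x : L) :
    norm K (FiniteField.frobeniusAlgHom K L x) = norm K x := by
  refine (algebraMap K L).injective ?_
  rw [algebraMap_norm_quadraticExtension, algebraMap_norm_quadraticExtension,
    frobeniusAlgHom_frobeniusAlgHom, mul_comm]

lemma exists_comp_norm_of_isPowInvariant {A : Type*} {q : ℕ} (hK : Fintype.card K = q ^ 2)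
    {f : L → A} (hf : IsPowInvariant (q + 1) f) : ∃ g : K → A, ∀ z, f z = g (norm K z) := by
  have : Finite L := Module.finite_of_finite K
  let := Fintype.ofFinite L
  have hsurj := FiniteField.norm_surjective K L
  refine ⟨f ∘ Function.surjInv hsurj, fun x => ?_⟩
  obtain ⟨y, hy⟩ : ∃ y, Function.surjInv hsurj (norm K x) = y := ⟨_, rfl⟩
  have hxy : norm K x = norm K y := by rw [← hy, Function.surjInv_eq hsurj]
  rw [Function.comp_apply, hy]
  rcases eq_or_ne y 0 with rfl | hy0
  · rw [Algebra.norm_zero, Algebra.norm_eq_zero_iff] at hxy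
    rw [hxy]
  obtain ⟨r, rfl⟩ : ∃ r, q = r + 1 := Nat.exists_eq_succ_of_ne_zero <| by
    rintro rfl
    exact Fintype.card_ne_zero (hK.trans (zero_pow two_ne_zero))
  have hcard : Fintype.card L = (r + 1 + 1) * (r * ((r + 1) ^ 2 + 1)) + 1 := by
    rw [card_quadraticExtension (K := K), hK]
    ring
  have hunit : (x / y) ^ ((r + 1) ^ 2 + 1) = 1 := by
    rw [← hK, pow_succ', ← FiniteField.frobeniusAlgHom_apply K,
      ← algebraMap_norm_quadraticExtension, div_eq_mul_inv, map_mul, hxy,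
      norm_inv_quadraticExtension, mul_inv_cancel₀ (Algebra.norm_ne_zero_iff.mpr hy0), map_one]
  obtain ⟨t, ht, htxy⟩ := exists_ne_zero_pow_eq_of_pow_eq_one hcard (x := x / y)
    (by rw [mul_comm r, pow_mul, hunit, one_pow])
  rw [← hf t ht y, htxy, div_mul_cancel₀ x hy0]

lemma sum_norm_quadraticExtension [Fintype L] {A : Type*} [AddCommMonoid A] (f : K → A) :
    ∑ z : L, f (norm K z) + Fintype.card K • f 0 = (Fintype.card K + 1) • ∑ x, f x := by
  have hcard : Fintype.card Lˣ = (Fintype.card K + 1) * Fintype.card Kˣ := by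
    rw [Fintype.card_units, Fintype.card_units, card_quadraticExtension (K := K) (L := L),
      ← Nat.sq_sub_sq, one_pow]
  have hunits := sum_comp_monoidHom_of_surjective (FiniteField.unitsMap_norm_surjective K L) hcard
    fun x => f x
  simp only [Units.coe_map] at hunits
  rw [sum_units_add, sum_units_add f, Algebra.norm_zero, hunits, smul_add, add_smul _ _ (f 0),
    one_smul]
  abel

variable [Fintype L] {ψ : AddChar K ℂ}

lemma sum_addChar_norm (hψ : ψ ≠ 1) {t : K} (ht : t ≠ 0) :
    ∑ z : L, ψ (t * norm K z) = -Fintype.card K := by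
  have h := sum_norm_quadraticExtension (L := L) fun x => ψ (t * x)
  rw [sum_addChar_mul hψ, if_neg ht, smul_zero, mul_zero, AddChar.map_zero_eq_one, nsmul_one] at h
  exact eq_neg_of_add_eq_zero_left h

lemma sum_addChar_norm_add_trace (hψ : ψ ≠ 1) {t : K} (ht : t ≠ 0) (y : L) :
    ∑ z : L, ψ (t * norm K z + trace K L (y * z)) =
      -Fintype.card K * ψ (-(norm K y / t)) := by
  -- Translation by `s` completes the square.
  set s := t⁻¹ • FiniteField.frobeniusAlgHom K L y
  have hs (z : L) : t * norm K z + trace K L (y * z) = t * norm K (z + s) + -(norm K y / t) := by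
    rw [norm_add_quadraticExtension, norm_smul_quadraticExtension, norm_frobeniusAlgHom, map_smul,
      frobeniusAlgHom_frobeniusAlgHom, mul_smul_comm, map_smul, smul_eq_mul, mul_comm z]
    field_simp
    ring
  simp only [hs, AddChar.map_add_eq_mul, ← Finset.sum_mul]
  rw [Fintype.sum_equiv (Equiv.addRight s) (fun z => ψ (t * norm K (z + s)))
    (fun z => ψ (t * norm K z)) fun z => rfl, sum_addChar_norm hψ ht]

variable {A : Type*} [AddCommGroup A] [Module ℂ A] {q : ℕ}

lemma sum_units_sum_addChar_smul (hψ : ψ ≠ 1) (hq : Odd q) (hK : Fintype.card K = q ^ 2)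
    (hψq : ∀ x, ψ (x ^ q) = ψ x) {f : K → A} (hf : IsPowInvariant (q + 1) f)
    (hsum : ∑ x, f x = 0) (v : K) :
    ∑ t : Kˣ, ∑ x, ψ (-(t * x) + v / t) • f x = (Fintype.card K : ℂ) • f v⁻¹ := by
  have hpow (x : K) : (x ^ q) ^ q = x := by rw [← pow_mul, ← sq, ← hK, FiniteField.pow_card]
  -- The substitution `x = -(w/t)^q` replaces `f x` by the value `f (-w^q)`, independent of `t`.
  have hsubst (t : Kˣ) : ∑ x, ψ (-(t * x) + v / t) • f x =
      ∑ w : K, ψ ((t : K)⁻¹ * (w + v)) • f (-w ^ q) := by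
    let e : K ≃ K := (Function.Involutive.toPerm _ hpow).trans
      (Equiv.mulLeft₀ (-(t : K)⁻¹ ^ (q + 1)) (by simp))
    refine (Fintype.sum_equiv e _ _ fun w => ?_).symm
    have he : e w = (t : K)⁻¹ ^ (q + 1) * -w ^ q := (neg_mul_comm _ _)
    have hte : -(t * e w) = ((t : K)⁻¹ * w) ^ q := by
      rw [he, mul_pow, pow_succ]
      field_simp
    rw [AddChar.map_add_eq_mul, hte, hψq, he, hf _ (inv_ne_zero t.ne_zero), mul_add,
      AddChar.map_add_eq_mul, div_eq_inv_mul]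
  have hsum' : ∑ w : K, f (-w ^ q) = 0 := by
    rw [← hsum]
    exact Fintype.sum_equiv ((Function.Involutive.toPerm _ hpow).trans (Equiv.neg K)) _ _
      fun w => rfl
  have hinv : f (v ^ q) = f v⁻¹ := by
    rcases eq_or_ne v 0 with rfl | hv
    · rw [zero_pow hq.pos.ne', inv_zero]
    · rw [← hf v hv v⁻¹, pow_succ, mul_assoc, mul_inv_cancel₀ hv, mul_one]
  calc ∑ t : Kˣ, ∑ x, ψ (-(t * x) + v / t) • f x
      = ∑ w : K, ((if w + v = 0 then (Fintype.card K : ℂ) else 0) - 1) • f (-w ^ q) := by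
        simp only [hsubst, ← sum_units_addChar_inv_mul hψ, Finset.sum_smul]
        exact Finset.sum_comm
    _ = (Fintype.card K : ℂ) • f v⁻¹ := by
        simp [sub_smul, hsum', ite_smul, add_eq_zero_iff_eq_neg, hq.neg_pow, hinv]

theorem sum_addChar_trace_smul_norm (hψ : ψ ≠ 1) (hq : Odd q) (hK : Fintype.card K = q ^ 2)
    (hψq : ∀ x, ψ (x ^ q) = ψ x) {f : K → A} (hf : IsPowInvariant (q + 1) f)
    (hsum : ∑ x, f x = 0) {y : L} (hy : y ≠ 0) :
    ∑ z : L, ψ (trace K L (y * z)) • f (norm K z) =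
      -(Fintype.card K : ℂ) • f (-norm K y)⁻¹ := by
  have hinversion (x : K) :
      (Fintype.card K : ℂ) • f x = ∑ w, ∑ t, ψ (t * x + -(t * w)) • f w := by
    have horth (w : K) : ∑ t, ψ (t * x + -(t * w)) = if w = x then (Fintype.card K : ℂ) else 0 := by
      simp only [← sub_eq_add_neg, ← mul_sub, mul_comm _ (x - w), sum_addChar_mul hψ,
        sub_eq_zero, eq_comm]
    simp only [← Finset.sum_smul, horth, ite_smul, zero_smul, Finset.sum_ite_eq',
      Finset.mem_univ, if_true]
  have hinner (w t : K) : ∑ z : L, ψ (trace K L (y * z)) • ψ (t * norm K z + -(t * w)) • f w =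
      (∑ z : L, ψ (t * norm K z + trace K L (y * z))) • ψ (-(t * w)) • f w := by
    rw [Finset.sum_smul]
    refine Finset.sum_congr rfl fun z _ => ?_
    rw [smul_smul, smul_smul, ← AddChar.map_add_eq_mul, ← AddChar.map_add_eq_mul]
    congr 2
    abel
  have hK0 : (Fintype.card K : ℂ) ≠ 0 := Nat.cast_ne_zero.mpr Fintype.card_ne_zero
  refine smul_right_injective A hK0 ?_
  calc (Fintype.card K : ℂ) • ∑ z : L, ψ (trace K L (y * z)) • f (norm K z)
      = ∑ t, ∑ w, (∑ z : L, ψ (t * norm K z + trace K L (y * z))) • ψ (-(t * w)) • f w := by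
        rw [Finset.smul_sum, Finset.sum_comm]
        simp only [smul_comm (Fintype.card K : ℂ), hinversion, Finset.smul_sum, ← hinner]
        rw [Finset.sum_comm]
        exact Finset.sum_congr rfl fun w _ => Finset.sum_comm
    _ = ∑ t : Kˣ, ∑ w, -(Fintype.card K : ℂ) • ψ (-(t * w) + -norm K y / t) • f w := by
        rw [sum_units_add]
        simp only [zero_mul, zero_add, sum_addChar_trace_mul hψ hy, zero_smul,
          Finset.sum_const_zero]
        refine Finset.sum_congr rfl fun t _ => Finset.sum_congr rfl fun w _ => ?_
        rw [sum_addChar_norm_add_trace hψ t.ne_zero, mul_smul, smul_smul (ψ _),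
          ← AddChar.map_add_eq_mul, add_comm, neg_div]
    _ = (Fintype.card K : ℂ) • -(Fintype.card K : ℂ) • f (-norm K y)⁻¹ := by
        simp only [← Finset.smul_sum, sum_units_sum_addChar_smul hψ hq hK hψq hf hsum]
        rw [smul_comm]

theorem sum_addChar_trace_smul_of_isPowInvariant (hψ : ψ ≠ 1) (hq : Odd q)
    (hK : Fintype.card K = q ^ 2) (hψq : ∀ x, ψ (x ^ q) = ψ x) {f : L → A}
    (hf : IsPowInvariant (q + 1) f) (hf0 : f 0 = 0) (hsum : ∑ z, f z = 0) (y : L) :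
    ∑ z, ψ (trace K L (y * z)) • f z = -(Fintype.card K : ℂ) • f y⁻¹ := by
  obtain ⟨g, hg⟩ := exists_comp_norm_of_isPowInvariant hK hf
  rcases eq_or_ne y 0 with rfl | hy
  · simp [hsum, hf0]
  have hg0 : g 0 = 0 := by rw [← hf0, hg, Algebra.norm_zero]
  have hgsum : ∑ x, g x = 0 := by
    have h := sum_norm_quadraticExtension (L := L) g
    simp only [← hg, hsum, hg0, smul_zero, add_zero] at h
    have h' : ((Fintype.card K + 1 : ℕ) : ℂ) • ∑ x, g x = 0 := by rw [Nat.cast_smul_eq_nsmul, ← h]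
    exact (smul_eq_zero.mp h').resolve_left (Nat.cast_ne_zero.mpr (Nat.succ_ne_zero _))
  have hgpow : IsPowInvariant (q + 1) g := by
    intro t ht x
    obtain ⟨s, rfl⟩ := FiniteField.norm_surjective K L t
    obtain ⟨z, rfl⟩ := FiniteField.norm_surjective K L x
    rw [← map_pow, ← map_mul, ← hg, ← hg, hf s (by rintro rfl; exact ht Algebra.norm_zero)]
  have hcard : Fintype.card K = (q + 1) * (q - 1) + 1 := by
    rw [hK, ← Nat.sq_sub_sq, one_pow, Nat.sub_add_cancel (Nat.one_le_pow _ _ hq.pos)]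
  simp only [hg]
  rw [sum_addChar_trace_smul_norm hψ hq hK hψq hgpow hgsum hy, inv_neg,
    hgpow.apply_neg hcard (hq.tsub_odd odd_one), norm_inv_quadraticExtension]

theorem sum_addChar_trace_smul_of_smul_invariant (hψ : ψ ≠ 1) {g : L → A}
    (hg : ∀ c : K, c ≠ 0 → ∀ z, g (c • z) = g z)
    (hsum : ∑ z, g z = (Fintype.card K : ℂ) • g 0) {δ : L} (hδ : δ ≠ 0)
    (htr : trace K L δ = 0) (y : L) :
    ∑ z, ψ (trace K L (y * z)) • g z = (Fintype.card K : ℂ) • g (δ * y⁻¹) := by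
  rcases eq_or_ne y 0 with rfl | hy
  · simpa using hsum
  have hy' : δ * y⁻¹ ≠ 0 := mul_ne_zero hδ (inv_ne_zero hy)
  have hline : ∑ z with trace K L (y * z) = 0, g z = ∑ c : K, g (c • (δ * y⁻¹)) := by
    rw [← Finset.sum_image fun c _ c' _ h => smul_left_injective K hy' h]
    refine Finset.sum_congr (Finset.ext fun z => ?_) fun _ _ => rfl
    simp only [Finset.mem_filter, Finset.mem_univ, true_and, Finset.mem_image,
      trace_eq_zero_iff_exists_smul hδ htr]
    refine exists_congr fun c => ?_
    rw [← smul_mul_assoc, ← div_eq_mul_inv, div_eq_iff hy, mul_comm z]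
  have hunits : (Fintype.card Kˣ : ℂ) ≠ 0 := Nat.cast_ne_zero.mpr Fintype.card_ne_zero
  refine smul_right_injective A hunits ?_
  dsimp only
  rw [sum_units_addChar_trace_smul hψ hg, hline, hsum, sum_units_add, zero_smul,
    Finset.sum_congr rfl fun t _ => hg _ (Units.ne_zero t) _, Finset.sum_const, Finset.card_univ,
    ← Nat.cast_smul_eq_nsmul ℂ, smul_add, add_sub_cancel_left, smul_comm]

end QuadraticExtension

section DiscreteLogarithm

variable {G : Type*} [Group G] [IsCyclic G]

/-- The discrete logarithm with respect to some fixed generator of a cyclic group, as a natural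
number; for a finite group it lies below the order and is additive modulo the order. -/
noncomputable def discreteLog (x : G) : ℕ :=
  ((zmodCyclicMulEquiv (inferInstance : IsCyclic G)).symm x).toAdd.val

variable [Finite G]

lemma natCast_discreteLog (x : G) : (discreteLog x : ZMod (Nat.card G)) =
    ((zmodCyclicMulEquiv (inferInstance : IsCyclic G)).symm x).toAdd :=
  ZMod.natCast_zmod_val _

lemma discreteLog_mul (x y : G) :
    discreteLog (x * y) ≡ discreteLog x + discreteLog y [MOD Nat.card G] := by
  rw [← ZMod.natCast_eq_natCast_iff, Nat.cast_add]
  simp only [natCast_discreteLog, map_mul, toAdd_mul]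

lemma discreteLog_pow_mul {d : ℕ} (hd : d ∣ Nat.card G) (x y : G) :
    discreteLog (x ^ d * y) ≡ discreteLog y [MOD d] := by
  have h : discreteLog (x ^ d * y) ≡ d * discreteLog x + discreteLog y [MOD Nat.card G] := by
    rw [← ZMod.natCast_eq_natCast_iff, Nat.cast_add, Nat.cast_mul]
    simp only [natCast_discreteLog, map_mul, toAdd_mul, map_pow, toAdd_pow, nsmul_eq_mul]
  simpa [Nat.ModEq] using h.of_dvd hd

lemma isSquare_of_even_discreteLog {x : G} (hx : Even (discreteLog x)) : IsSquare x := by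
  obtain ⟨k, hk⟩ := hx
  let e := zmodCyclicMulEquiv (inferInstance : IsCyclic G)
  refine ⟨e (.ofAdd k), ?_⟩
  rw [← map_mul, ← ofAdd_add, ← Nat.cast_add, ← hk, natCast_discreteLog, ofAdd_toAdd,
    MulEquiv.apply_symm_apply]

lemma sum_discreteLog [Fintype G] {A : Type*} [AddCommMonoid A] (f : ℕ → A) :
    ∑ x : G, f (discreteLog x) = ∑ k ∈ Finset.range (Fintype.card G), f k := by
  have hinj : Function.Injective (discreteLog : G → ℕ) := fun x y h =>
    (zmodCyclicMulEquiv (inferInstance : IsCyclic G)).symm.injective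
      (Multiplicative.toAdd.injective (ZMod.val_injective _ h))
  rw [← Finset.sum_image (f := f) hinj.injOn]
  refine Finset.sum_congr (Finset.eq_of_subset_of_card_le ?_ ?_) fun _ _ => rfl
  · refine Finset.image_subset_iff.mpr fun x _ => Finset.mem_range.mpr ?_
    rw [← Nat.card_eq_fintype_card]
    exact ZMod.val_lt _
  · rw [Finset.card_range, Finset.card_image_of_injective _ hinj, Finset.card_univ]

end DiscreteLogarithm

section HalfLabels

lemma odd_of_two_mul_dvd_add_one {m q : ℕ} (hm : 2 * m ∣ q + 1) : Odd q := by
  have h2 : 2 ∣ q + 1 := (dvd_mul_right 2 m).trans hm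
  rw [← Nat.not_even_iff_odd, even_iff_two_dvd]
  omega

lemma sum_range_mul_add_of_periodic {A : Type*} [AddCommMonoid A] {f : ℕ → A} {n : ℕ}
    (hf : Function.Periodic f n) (k r : ℕ) :
    ∑ j ∈ Finset.range (n * k + r), f j =
      k • ∑ j ∈ Finset.range n, f j + ∑ j ∈ Finset.range r, f j := by
  induction k with
  | zero => simp
  | succ k ih =>
    rw [mul_add_one, add_comm (n * k), add_assoc, Finset.sum_range_add, succ_nsmul',
      add_assoc, ← ih]
    simp only [add_comm n, hf _]

lemma sum_range_two_mul {A : Type*} [AddCommMonoid A] (f : ℕ → A) (n : ℕ) :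
    ∑ j ∈ Finset.range (2 * n), f j = ∑ k ∈ Finset.range n, (f (2 * k) + f (2 * k + 1)) := by
  induction n with
  | zero => rfl
  | succ n ih => rw [mul_add_one, Finset.sum_range_succ, Finset.sum_range_succ, ih, add_assoc,
      Finset.sum_range_succ]

variable {A : Type*} [CommRing A] {m : ℕ} {τ : AddChar (ZMod m) A} {n : ℕ} {ε : ZMod 2}

lemma sum_range_addChar [NeZero m] (hτ : ∑ t, τ t = 0) (k r : ℕ) :
    ∑ j ∈ Finset.range (m * k + r), τ j = ∑ j ∈ Finset.range r, τ j := by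
  have hperiod : Function.Periodic (fun j : ℕ => τ j) m := fun j => by simp
  have hsum : ∑ j ∈ Finset.range m, τ j = ∑ t, τ t :=
    Finset.sum_nbij' (fun j => j) ZMod.val (by simp) (by simp [ZMod.val_lt])
      (fun j hj => ZMod.val_cast_of_lt (Finset.mem_range.mp hj)) (by simp) (by simp)
  rw [sum_range_mul_add_of_periodic hperiod, hsum, hτ, smul_zero, zero_add]

lemma exists_sum_range_addChar_eq_one [NeZero m] (hτ : ∑ t, τ t = 0) {q : ℕ}
    (hm : 2 * m ∣ q + 1) : ∃ n, q ^ 2 + 1 = 2 * n ∧ ∑ j ∈ Finset.range n, τ j = 1 := by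
  obtain ⟨r, rfl⟩ : ∃ r, q = r + 1 :=
    Nat.exists_eq_succ_of_ne_zero (odd_of_two_mul_dvd_add_one hm).pos.ne'
  obtain ⟨k, hk⟩ := hm
  refine ⟨m * (k * r) + 1, ?_, ?_⟩
  · linear_combination r * hk
  · rw [sum_range_addChar hτ, Finset.sum_range_one, Nat.cast_zero, AddChar.map_zero_eq_one]

/-- The function on `ℕ`, periodic with period `2 * n`, which for `k < n` takes the value `τ k` at
that one of `2 * k`, `2 * k + 1` which has parity `ε`, and `0` at the other one. -/
noncomputable def halfLabel (τ : AddChar (ZMod m) A) (n : ℕ) (ε : ZMod 2) (j : ℕ) : A :=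
  if (j : ZMod 2) = ε then τ (j % (2 * n) / 2 : ℕ) else 0

lemma halfLabel_congr {j k : ℕ} (h : j ≡ k [MOD 2 * n]) :
    halfLabel τ n ε j = halfLabel τ n ε k := by
  have hpar : (j : ZMod 2) = k := (ZMod.natCast_eq_natCast_iff j k 2).mpr (h.of_mul_right n)
  rw [halfLabel, halfLabel, hpar, h]

lemma sum_range_two_mul_halfLabel :
    ∑ j ∈ Finset.range (2 * n), halfLabel τ n ε j = ∑ k ∈ Finset.range n, τ k := by
  rw [sum_range_two_mul]
  refine Finset.sum_congr rfl fun k hk => ?_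
  rw [Finset.mem_range] at hk
  have heven : 2 * k % (2 * n) / 2 = k := by rw [Nat.mod_eq_of_lt (by omega)]; omega
  have hodd : (2 * k + 1) % (2 * n) / 2 = k := by rw [Nat.mod_eq_of_lt (by omega)]; omega
  have htwo : (2 : ZMod 2) = 0 := rfl
  obtain rfl | rfl := (by decide : ∀ ε : ZMod 2, ε = 0 ∨ ε = 1) ε <;>
    simp [halfLabel, heven, hodd, htwo]

lemma sum_range_mul_halfLabel (k : ℕ) :
    ∑ j ∈ Finset.range (2 * n * k), halfLabel τ n ε j = k • ∑ j ∈ Finset.range n, τ j := by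
  have hperiod : Function.Periodic (halfLabel τ n ε) (2 * n) := fun j =>
    halfLabel_congr (Nat.add_modEq_right ..)
  have h := sum_range_mul_add_of_periodic hperiod k 0
  rwa [Finset.sum_range_zero, add_zero, add_zero, sum_range_two_mul_halfLabel] at h

end HalfLabels

section FieldLabels

variable {F : Type*} [Field F] [Fintype F] {A : Type*} [CommRing A] {m : ℕ}
  {τ : AddChar (ZMod m) A} {n : ℕ} {c : A} {ε : ZMod 2}

/-- The half labelling `halfLabel τ n ε` of the discrete logarithm, extended to the whole field by
the value `c` at `0`. -/
noncomputable def logLabel (τ : AddChar (ZMod m) A) (n : ℕ) (c : A) (ε : ZMod 2) (x : F) : A :=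
  if hx : x = 0 then c else halfLabel τ n ε (discreteLog (Units.mk0 x hx))

lemma logLabel_zero : logLabel τ n c ε (0 : F) = c :=
  dif_pos rfl

lemma logLabel_units (x : Fˣ) : logLabel τ n c ε (x : F) = halfLabel τ n ε (discreteLog x) := by
  rw [logLabel, dif_neg x.ne_zero, Units.mk0_val]

lemma isPowInvariant_logLabel {d : ℕ} (hd : d ∣ Nat.card Fˣ) (hnd : 2 * n ∣ d) :
    IsPowInvariant d (logLabel τ n c ε : F → A) := by
  intro t ht x
  rcases eq_or_ne x 0 with rfl | hx
  · rw [mul_zero]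
  lift t to Fˣ using ht.isUnit
  lift x to Fˣ using hx.isUnit
  rw [← Units.val_pow_eq_pow_val, ← Units.val_mul, logLabel_units, logLabel_units]
  exact halfLabel_congr ((discreteLog_pow_mul hd t x).of_dvd hnd)

lemma sum_logLabel {k : ℕ} (hF : Nat.card Fˣ = 2 * n * k) :
    ∑ x : F, logLabel τ n c ε x = c + k • ∑ j ∈ Finset.range n, τ j := by
  rw [sum_units_add, logLabel_zero]
  simp only [logLabel_units]
  rw [sum_discreteLog (halfLabel τ n ε), ← Nat.card_eq_fintype_card, hF, sum_range_mul_halfLabel]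

lemma exists_halfLabel_eq (n' : ℕ) {j k : ℕ} {σ : ZMod 2} (hjk : (k : ZMod 2) = j + σ) :
    ∃ π s t, halfLabel τ n π j = τ s ∧ halfLabel τ n (π + 1) j = 0 ∧
      halfLabel τ n' (π + σ) k = τ t ∧ halfLabel τ n' (π + 1 + σ) k = 0 := by
  refine ⟨j, _, _, if_pos rfl, if_neg ?_, if_pos hjk, if_neg ?_⟩
  · simp
  · simp [hjk, add_right_comm]

lemma isSplitLabelling_logLabel (n' : ℕ) :
    IsSplitLabelling τ (logLabel τ n 1 : ZMod 2 → F → A) (logLabel τ n' 0) where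
  a_zero _ := logLabel_zero
  b_zero _ := logLabel_zero
  exists_label x hx := by
    lift x to Fˣ using hx.isUnit
    simp only [logLabel_units]
    simpa only [add_zero] using exists_halfLabel_eq n' (add_zero (discreteLog x : ZMod 2)).symm

lemma isSplitLabelling_logLabel_nonsquare_mul (n' : ℕ) (hF : 2 ∣ Nat.card Fˣ) {δ : F}
    (hδ : ¬ IsSquare δ) :
    IsSplitLabelling τ (fun ε y => logLabel τ n 1 ε (δ * y))
      (fun ε (y : F) => logLabel τ n' 0 (ε + 1) y) where
  a_zero _ := by rw [mul_zero, logLabel_zero]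
  b_zero _ := logLabel_zero
  exists_label y hy := by
    have hδ0 : δ ≠ 0 := by
      rintro rfl
      exact hδ (IsSquare.zero)
    lift δ to Fˣ using hδ0.isUnit
    lift y to Fˣ using hy.isUnit
    have hodd : (discreteLog δ : ZMod 2) = 1 := by
      rw [ZMod.natCast_eq_one_iff_odd, ← Nat.not_even_iff_odd]
      exact fun h => hδ ((isSquare_of_even_discreteLog h).map (Units.coeHom F))
    have hparity : (discreteLog y : ZMod 2) = discreteLog (δ * y) + 1 := by
      rw [(ZMod.natCast_eq_natCast_iff _ _ 2).mpr ((discreteLog_mul δ y).of_dvd hF), Nat.cast_add,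
        hodd, add_right_comm, CharTwo.add_self_eq_zero, zero_add]
    simp only [← Units.val_mul, logLabel_units]
    exact exists_halfLabel_eq n' hparity

end FieldLabels

section FieldBlocks

open Algebra (norm trace)

lemma exists_addChar_ne_one_pow_invariant {K : Type*} [Field K] [Fintype K] {q : ℕ}
    (hK : Fintype.card K = q ^ 2) : ∃ ψ : AddChar K ℂ, ψ ≠ 1 ∧ ∀ x, ψ (x ^ q) = ψ x := by
  let p := ringChar K
  have hp : Fact p.Prime := ⟨CharP.char_is_prime K p⟩
  let : Algebra (ZMod p) K := ZMod.algebra K p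
  obtain ⟨k, -, hk⟩ := FiniteField.card K p
  obtain ⟨n, -, rfl⟩ := (Nat.dvd_prime_pow hp.out).mp (hk ▸ hK ▸ dvd_pow_self q two_ne_zero)
  refine ⟨(ZMod.stdAddChar (N := p)).compAddMonoidHom (trace (ZMod p) K).toAddMonoidHom, ?_, ?_⟩
  · obtain ⟨x, hx⟩ := Algebra.trace_surjective (ZMod p) K 1
    refine AddChar.ne_one_iff.mpr ⟨x, ?_⟩
    simpa [hx] using ZMod.injective_stdAddChar.ne (one_ne_zero (α := ZMod p))
  · intro x
    have htrace := Algebra.trace_eq_of_algEquiv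
      (FiniteField.frobeniusAlgEquivOfAlgebraic (ZMod p) K ^ n) x
    rw [AlgEquiv.coe_pow, FiniteField.coe_frobeniusAlgEquivOfAlgebraic_iterate, ZMod.card] at htrace
    exact congrArg ZMod.stdAddChar htrace

lemma bijective_mulShift {F : Type*} [Field F] [Finite F] {ψ : AddChar F ℂ} (hψ : ψ ≠ 1) :
    Function.Bijective ψ.mulShift := by
  let := Fintype.ofFinite F
  exact (Fintype.bijective_iff_injective_and_card _).mpr
    ⟨AddChar.to_mulShift_inj_of_isPrimitive (.of_ne_one hψ), AddChar.card_eq.symm⟩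

variable {K L : Type*} [Field K] [Field L] [Algebra K L] [Algebra.IsQuadraticExtension K L]

lemma exists_ne_zero_trace_eq_zero [Finite K] : ∃ δ : L, δ ≠ 0 ∧ trace K L δ = 0 := by
  have : Nontrivial (trace K L).ker :=
    Module.nontrivial_of_finrank_pos (R := K) (by
      rw [finrank_ker_trace_quadraticExtension]
      exact one_pos)
  obtain ⟨⟨δ, htr⟩, hδ⟩ := exists_ne (0 : (trace K L).ker)
  exact ⟨δ, fun h => hδ (Subtype.ext h), htr⟩

lemma exists_equiv_charSum_eq_sum_addChar_trace [Finite K] [Fintype L] {ψ : AddChar K ℂ}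
    (hψ : ψ ≠ 1) {A : Type*} [AddCommGroup A] [Module ℂ A] :
    ∃ e : AddChar L ℂ ≃ L, (∀ χ, e χ = 0 ↔ χ = 0) ∧
      ∀ (f : L → A) χ, charSum f χ = ∑ z, ψ (trace K L (e χ * z)) • f z := by
  let Ψ : AddChar L ℂ := ψ.compAddMonoidHom (trace K L).toAddMonoidHom
  let e := Equiv.ofBijective Ψ.mulShift (bijective_mulShift (compAddMonoidHom_trace_ne_one hψ))
  refine ⟨e.symm, fun χ => ?_, fun f χ => ?_⟩
  · have he0 : e 0 = 0 := AddChar.mulShift_zero Ψ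
    rw [Equiv.symm_apply_eq, he0]
  · rw [← e.apply_symm_apply χ, e.symm_apply_apply]
    rfl

variable [Fintype K]

lemma not_isSquare_of_trace_eq_zero (hK : Fintype.card K % 4 = 1) {δ : L} (hδ : δ ≠ 0)
    (htr : trace K L δ = 0) : ¬ IsSquare δ := by
  have : Finite L := Module.finite_of_finite K
  let := Fintype.ofFinite L
  rintro ⟨t, rfl⟩
  have ht : t ≠ 0 := left_ne_zero_of_mul hδ
  have hchar : ringChar L ≠ 2 := by
    rw [Ne, FiniteField.even_card_iff_char_two, card_quadraticExtension (K := K), Nat.pow_mod]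
    have hmod : Fintype.card K % 2 = 1 := by omega
    simp [hmod]
  obtain ⟨i, hi⟩ := FiniteField.isSquare_neg_one_iff.mpr (show Fintype.card K % 4 ≠ 3 by omega)
  obtain ⟨c, hc, hfrob⟩ : ∃ c : K, c * c = -1 ∧ FiniteField.frobeniusAlgHom K L t = c • t := by
    have hsq : FiniteField.frobeniusAlgHom K L t * FiniteField.frobeniusAlgHom K L t =
        i • t * i • t := by
      have h := algebraMap_trace_quadraticExtension (K := K) (t * t)
      rw [htr, map_zero, map_mul] at h
      rw [smul_mul_smul_comm, ← hi, neg_one_smul]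
      exact (neg_eq_of_add_eq_zero_right h.symm).symm
    rcases mul_self_eq_mul_self_iff.mp hsq with h | h
    · exact ⟨i, hi.symm, h⟩
    · exact ⟨-i, by rw [neg_mul_neg, ← hi], by rw [h, neg_smul]⟩
  have hneg : t = -t := by
    conv_lhs => rw [← frobeniusAlgHom_frobeniusAlgHom (K := K) t, hfrob, map_smul, hfrob, smul_smul,
      hc, neg_one_smul]
  exact ht ((Ring.eq_self_iff_eq_zero_of_char_ne_two hchar).mp hneg.symm)

lemma IsPowInvariant.apply_smul {A : Type*} {f : L → A}
    (hf : IsPowInvariant (Fintype.card K + 1) f) {c : K} (hc : c ≠ 0) (z : L) :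
    f (c • z) = f z := by
  have : Finite L := Module.finite_of_finite K
  obtain ⟨t, rfl⟩ := FiniteField.norm_surjective K L c
  have ht : t ≠ 0 := by
    rintro rfl
    exact hc Algebra.norm_zero
  rw [Algebra.smul_def, algebraMap_norm_quadraticExtension, FiniteField.frobeniusAlgHom_apply,
    ← pow_succ', hf t ht]

lemma card_units_quadraticExtension :
    Nat.card Lˣ = (Fintype.card K + 1) * (Fintype.card K - 1) := by
  have : Finite L := Module.finite_of_finite K
  let := Fintype.ofFinite L
  rw [Nat.card_eq_fintype_card, Fintype.card_units, card_quadraticExtension (K := K),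
    ← Nat.sq_sub_sq, one_pow]

lemma card_units_quadraticExtension_of_sq {q : ℕ} (hK : Fintype.card K = q ^ 2) :
    Nat.card Lˣ = (q + 1) * ((q - 1) * (q ^ 2 + 1)) := by
  rw [card_units_quadraticExtension (K := K), hK, ← mul_assoc,
    ← Nat.sq_sub_sq q 1, one_pow, mul_comm]

variable [Fintype L] {A : Type*} [CommRing A] [Algebra ℂ A] {m : ℕ} {τ : AddChar (ZMod m) A}
  {ψ : AddChar K ℂ}

lemma sum_addChar_trace_smul_logLabel_one (hψ : ψ ≠ 1) {n : ℕ} (hn : Fintype.card K + 1 = 2 * n)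
    (hτ : ∑ j ∈ Finset.range n, τ j = 1) {δ : L} (hδ : δ ≠ 0) (htr : trace K L δ = 0)
    (ε : ZMod 2) (y : L) :
    ∑ z, ψ (trace K L (y * z)) • logLabel τ n 1 ε z =
      (Fintype.card K : ℂ) • logLabel τ n 1 ε (δ * y⁻¹) := by
  have hcard := card_units_quadraticExtension (K := K) (L := L)
  have hf : IsPowInvariant (Fintype.card K + 1) (logLabel τ n 1 ε : L → A) :=
    isPowInvariant_logLabel (hcard ▸ dvd_mul_right _ _) hn.symm.dvd
  refine sum_addChar_trace_smul_of_smul_invariant hψ (fun c hc z => hf.apply_smul hc z) ?_ hδ htr y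
  rw [sum_logLabel (hn ▸ hcard), hτ, logLabel_zero, Nat.cast_smul_eq_nsmul, ← succ_nsmul',
    Nat.sub_add_cancel Fintype.card_pos]

lemma sum_addChar_trace_smul_logLabel_zero [NeZero m] (hψ : ψ ≠ 1) {q : ℕ} (hq : Odd q)
    (hK : Fintype.card K = q ^ 2) (hψq : ∀ x, ψ (x ^ q) = ψ x) (hm : 2 * m ∣ q + 1)
    (hτ : ∑ t, τ t = 0) (ε : ZMod 2) (y : L) :
    ∑ z, ψ (trace K L (y * z)) • logLabel τ m 0 ε z =
      -(Fintype.card K : ℂ) • logLabel τ m 0 ε y⁻¹ := by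
  have hcard := card_units_quadraticExtension_of_sq (L := L) hK
  have hsum : ∑ j ∈ Finset.range m, τ j = 0 := by simpa using sum_range_addChar hτ 1 0
  refine sum_addChar_trace_smul_of_isPowInvariant hψ hq hK hψq
    (isPowInvariant_logLabel (hcard ▸ dvd_mul_right _ _) hm) logLabel_zero ?_ y
  obtain ⟨k, hk⟩ := hm
  rw [sum_logLabel (k := k * ((q - 1) * (q ^ 2 + 1))) (by rw [hcard, hk, mul_assoc]), hsum,
    smul_zero, add_zero]

variable (K) in
theorem nonempty_buildingBlock_quadraticExtension [NeZero m] (hτ : ∑ t, τ t = 0) {q : ℕ}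
    (hm : 2 * m ∣ q + 1) (hK : Fintype.card K = q ^ 2) : Nonempty (BuildingBlock τ L (q ^ 2)) := by
  obtain ⟨ψ, hψ, hψq⟩ := exists_addChar_ne_one_pow_invariant hK
  obtain ⟨δ, hδ, htr⟩ := exists_ne_zero_trace_eq_zero (K := K) (L := L)
  obtain ⟨n, hn, hτn⟩ := exists_sum_range_addChar_eq_one hτ hm
  obtain ⟨e, he0, he⟩ := exists_equiv_charSum_eq_sum_addChar_trace (L := L) hψ (A := A)
  have hq := odd_of_two_mul_dvd_add_one hm
  have hq0 : ((q ^ 2 : ℕ) : ℂ) ≠ 0 := Nat.cast_ne_zero.mpr (pow_ne_zero 2 hq.pos.ne')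
  have hn' : Fintype.card K + 1 = 2 * n := by rw [hK, hn]
  have hcard := card_units_quadraticExtension (K := K) (L := L)
  have hcard' := card_units_quadraticExtension_of_sq (L := L) hK
  have hL : Fintype.card L = Nat.card Lˣ + 1 := by
    rw [Nat.card_eq_fintype_card, Fintype.card_units, Nat.sub_add_cancel Fintype.card_pos]
  have hδsq : ¬ IsSquare δ := by
    refine not_isSquare_of_trace_eq_zero ?_ hδ htr
    obtain ⟨r, hr⟩ := hq
    rw [hK, hr, show (2 * r + 1) ^ 2 = 4 * (r ^ 2 + r) + 1 by ring, Nat.mul_add_mod]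
  have hdual := isSplitLabelling_logLabel_nonsquare_mul (τ := τ) (n := n) m
    (hcard' ▸ ((dvd_mul_right 2 m).trans hm).mul_right _) hδsq
  refine ⟨⟨logLabel τ n 1, logLabel τ m 0, fun ε => ?_, fun ε => ?_,
    isSplitLabelling_logLabel m, ?_⟩⟩
  · exact (isPowInvariant_logLabel (hcard ▸ dvd_mul_right _ _) hn'.symm.dvd).apply_neg
      (hcard ▸ hL) (hK ▸ hq.pow.tsub_odd odd_one)
  · exact (isPowInvariant_logLabel (hcard' ▸ dvd_mul_right _ _) hm).apply_neg
      (hcard' ▸ hL) ((hq.tsub_odd odd_one).mul_right _)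
  · convert hdual.comp (f := fun χ => (e χ)⁻¹) (fun χ => inv_eq_zero.trans (he0 χ))
      using 3 with ε χ ε χ
    · rw [he, sum_addChar_trace_smul_logLabel_one hψ hn' hτn hδ htr, hK, inv_smul_smul₀ hq0]
    · rw [he, sum_addChar_trace_smul_logLabel_zero hψ hq hK hψq hm hτ, hK, smul_smul, neg_mul_neg,
        inv_mul_cancel₀ hq0, one_smul]

theorem nonempty_buildingBlock_of_card_eq_pow_four {F : Type*} [Field F] [Fintype F] [NeZero m]
    (hτ : ∑ t, τ t = 0) {q : ℕ} (hm : 2 * m ∣ q + 1) (hF : Fintype.card F = q ^ 4) :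
    Nonempty (BuildingBlock τ F (q ^ 2)) := by
  let p := ringChar F
  have hp : Fact p.Prime := ⟨CharP.char_is_prime F p⟩
  let : Algebra (ZMod p) F := ZMod.algebra F p
  obtain ⟨k, -, hk⟩ := FiniteField.card F p
  obtain ⟨n, -, rfl⟩ := (Nat.dvd_prime_pow hp.out).mp (hk ▸ hF ▸ dvd_pow_self q four_ne_zero)
  have hn : n ≠ 0 := by
    rintro rfl
    exact Fintype.one_lt_card.ne' (hF.trans (by simp))
  let K := GaloisField p (n * 2)
  have hK : Nat.card K = (p ^ n) ^ 2 := by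
    rw [GaloisField.card p _ (mul_ne_zero hn two_ne_zero), pow_mul]
  let : Fintype K := Fintype.ofFinite K
  rw [Nat.card_eq_fintype_card] at hK
  have hdvd : Module.finrank (ZMod p) K ∣ Module.finrank (ZMod p) F := by
    have h := Module.card_eq_pow_finrank (K := ZMod p) (V := F)
    rw [hF, ZMod.card, ← pow_mul] at h
    rw [GaloisField.finrank p (mul_ne_zero hn two_ne_zero),
      ← Nat.pow_right_injective hp.out.two_le h]
    exact mul_dvd_mul_left n (by decide)
  obtain ⟨φ⟩ := FiniteField.nonempty_algHom_of_finrank_dvd hdvd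
  let : Algebra K F := φ.toAlgebra
  have : Algebra.IsQuadraticExtension K F := by
    refine ⟨?_⟩
    have h := Module.card_eq_pow_finrank (K := K) (V := F)
    rw [hF, hK, ← pow_mul (p ^ n)] at h
    have := Nat.pow_right_injective (Nat.one_lt_pow hn hp.out.one_lt) h
    omega
  exact nonempty_buildingBlock_quadraticExtension K hτ hm hK

end FieldBlocks

section LatinSquareTypes

lemma exists_card_eq_add_and_card_filter_eq {Λ : Type*} [Fintype Λ] (T : Finset Λ) {i j : ℕ}
    (hj : j ≤ #T) (hi : i + #T ≤ Fintype.card Λ) :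
    ∃ S : Finset Λ, #S = i + j ∧ #{t ∈ T | t ∈ S} = j := by
  obtain ⟨T', hT', rfl⟩ := Finset.exists_subset_card_eq hj
  obtain ⟨I, hI, rfl⟩ := Finset.exists_subset_card_eq (s := Tᶜ) (n := i) (by
    rw [Finset.card_compl]
    omega)
  have hdisj : Disjoint I T := Finset.disjoint_left.mpr fun x hx => Finset.mem_compl.mp (hI hx)
  refine ⟨I ∪ T', Finset.card_union_of_disjoint (hdisj.mono_right hT'), ?_⟩
  rw [Finset.filter_mem_eq_inter, Finset.inter_union_distrib_left,
    Finset.disjoint_iff_inter_eq_empty.mp hdisj.symm, Finset.empty_union,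
    Finset.inter_eq_right.mpr hT']

variable {Λ G : Type*} [AddCommGroup Λ] [Fintype Λ] [AddCommGroup G] [Fintype G] [DecidableEq G]
  {u : ℕ}

theorem BuildingBlock.exists_isLatinSquarePDS_of_two_le (hu : 2 ≤ u) (hG : Fintype.card G = u ^ 2)
    (B : BuildingBlock (nontrivialCharacters Λ) G u) {i j : ℕ} (hi : i + 2 ≤ Fintype.card Λ)
    (hj : j ≤ 2) {c : ℤ}
    (hc : (Fintype.card Λ : ℤ) * c = (i + j) * (u - 1) + Fintype.card Λ * j) :
    ∃ D : Finset G, IsLatinSquarePDS D u c := by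
  obtain ⟨t⟩ : Nonempty (ZMod 2 ↪ Λ) :=
    Function.Embedding.nonempty_of_card_le (by rw [ZMod.card]; omega)
  have ht : #(Finset.univ.map t) = 2 := by rw [Finset.card_map, Finset.card_univ, ZMod.card]
  obtain ⟨S, hS, hSj⟩ := exists_card_eq_add_and_card_filter_eq (Finset.univ.map t)
    (ht ▸ hj) (ht ▸ hi)
  have hSj' : #{ε | t ε ∈ S} = j := by rw [← hSj, Finset.filter_map, Finset.card_map]; rfl
  refine exists_isLatinSquarePDS_of_nontrivialCharacters hu hG B S t ?_
  rw [hc, hS, hSj', Nat.cast_add]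

theorem BuildingBlock.exists_isLatinSquarePDS_of_one_le (hu : 2 ≤ u) (hG : Fintype.card G = u ^ 2)
    (B : BuildingBlock (nontrivialCharacters Λ) G u) {i j : ℕ} (hi : i + 1 ≤ Fintype.card Λ)
    (hj : j ≤ 1) {c : ℤ}
    (hc : (Fintype.card Λ : ℤ) * c = (j + i) * (u - 1) + 2 * Fintype.card Λ * j) :
    ∃ D : Finset G, IsLatinSquarePDS D u c := by
  obtain ⟨S, hS, hSj⟩ := exists_card_eq_add_and_card_filter_eq ({0} : Finset Λ) hj hi
  have hSj' : #{_ε : ZMod 2 | (0 : Λ) ∈ S} = 2 * j := by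
    rw [← hSj, Finset.filter_singleton]
    by_cases h0 : (0 : Λ) ∈ S <;> simp [h0, ZMod.card]
  refine exists_isLatinSquarePDS_of_nontrivialCharacters hu hG B S (fun _ => 0) ?_
  rw [hc, hS, hSj']
  push_cast
  ring

end LatinSquareTypes

theorem stmt_18 (m s : ℕ) (hm : 0 < m) (hs : 0 < s)
    (q : Fin s → ℕ) (hq : ∀ i, IsPrimePow (q i)) (hdvd : ∀ i, 2 * m ∣ q i + 1)
    (F : Fin s → Type*) [∀ i, Field (F i)] [∀ i, Fintype (F i)]
    (hcard : ∀ i, Fintype.card (F i) = q i ^ 4)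
    (u : ℕ) (hu : u = ∏ i, q i ^ 2) :
    -- form 1: c = (i+j)(u−1)/m + j for 0 ≤ i ≤ m−2, j ∈ {0,1,2}
    (∀ i j : ℕ, i + 2 ≤ m → j ≤ 2 → ∀ c : ℤ,
      (m : ℤ) * c = ((i : ℤ) + j) * ((u : ℤ) - 1) + (m : ℤ) * j →
      ∃ D : Finset (∀ i', F i'),
        (0 : ∀ i', F i') ∉ D ∧ (∀ g ∈ D, -g ∈ D) ∧
        ∃ k l μ : ℕ,
          (SimpleGraph.fromRel fun a b : ∀ i', F i' => a - b ∈ D).IsSRGWith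
            (u ^ 2) k l μ ∧
          (k : ℤ) = c * ((u : ℤ) - 1) ∧
          (l : ℤ) = (u : ℤ) + c ^ 2 - 3 * c ∧
          (μ : ℤ) = c ^ 2 - c) ∧
    -- form 2: c = (j+i)(u−1)/m + 2j for 0 ≤ i ≤ m−1, j ∈ {0,1}
    (∀ i j : ℕ, i + 1 ≤ m → j ≤ 1 → ∀ c : ℤ,
      (m : ℤ) * c = ((j : ℤ) + i) * ((u : ℤ) - 1) + 2 * (m : ℤ) * j →
      ∃ D : Finset (∀ i', F i'),
        (0 : ∀ i', F i') ∉ D ∧ (∀ g ∈ D, -g ∈ D) ∧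
        ∃ k l μ : ℕ,
          (SimpleGraph.fromRel fun a b : ∀ i', F i' => a - b ∈ D).IsSRGWith
            (u ^ 2) k l μ ∧
          (k : ℤ) = c * ((u : ℤ) - 1) ∧
          (l : ℤ) = (u : ℤ) + c ^ 2 - 3 * c ∧
          (μ : ℤ) = c ^ 2 - c) := by
  have : NeZero m := ⟨hm.ne'⟩
  have hm' : Fintype.card (ZMod m) = m := ZMod.card m
  have hG : Fintype.card (∀ i, F i) = u ^ 2 := by
    rw [Fintype.card_pi, hu, ← Finset.prod_pow]
    exact Finset.prod_congr rfl fun i _ => by rw [hcard, ← pow_mul]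
  have hu2 : 2 ≤ u := by
    have := Pi.nontrivial_at (f := F) ⟨0, hs⟩
    have : 1 < u ^ 2 := hG ▸ Fintype.one_lt_card (α := ∀ i, F i)
    exact lt_of_pow_lt_pow_left₀ 2 u.zero_le (by rwa [one_pow])
  obtain ⟨B⟩ := BuildingBlock.nonempty_pi fun i =>
    nonempty_buildingBlock_of_card_eq_pow_four (sum_nontrivialCharacters (Λ := ZMod m))
      (hdvd i) (hcard i)
  rw [← hu] at B
  constructor
  · intro i j hi hj c hc
    exact B.exists_isLatinSquarePDS_of_two_le hu2 hG (hm'.symm ▸ hi) hj (hm'.symm ▸ hc)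
  · intro i j hi hj c hc
    exact B.exists_isLatinSquarePDS_of_one_le hu2 hG (hm'.symm ▸ hi) hj (hm'.symm ▸ hc)
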